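/- For every n ≥ 1, the Sturmian sequence value v_{α,0}(n) equals the n-th letter c_α(n) of the infinite word c_α; i.e., v_{α,0} restricted to {1,2,3,…} coincides with c_α. -/

import Mathlib

/-!
Let `p_n / q_n` be the convergents of `α`. For `0 < k < q_{n+1}` the number `k α` is at least as
far from every integer as `q_n α` is from `p_n` (best approximation), so adding `q_n α - p_n` to
`k α` does not carry it across an integer: `⌊(k + q_n) α⌋ = ⌊k α⌋ + p_n`. Since `v_{α,0}(k)` is the
increment `⌊(k + 1) α⌋ - ⌊k α⌋`, the first `q_{n+1}` letters of `v_{α,0}` repeat with period `q_n`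
as soon as `2 ≤ q_n`. As `q_{n+1} = a_{n+1} q_n + q_{n-1}`, the prefixes of lengths `q_n` thus obey
the recursion `s_{n+1} = s_n ^ a_{n+1} s_{n-1}` of the standard words. The word `s_1` and the
last letter of `s_2` are read off directly, since `q_0 = 1` and `q_1` may be `1` as well.
-/

open scoped Classical

noncomputable section

/-- The Sturmian potential `v_{α,θ}(n) = χ_{[1-α,1)}(nα + θ mod 1)`. -/
def sturmian (α θ : ℝ) (n : ℤ) : ℝ :=
  if Int.fract (n * α + θ) ∈ Set.Ico (1 - α) 1 then 1 else 0

/-- Iterates of the Gauss map, starting at `α`. -/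
def cfGauss (α : ℝ) : ℕ → ℝ
  | 0 => α
  | n + 1 => Int.fract (cfGauss α n)⁻¹

/-- The continued fraction coefficients `a_n` of `α = [a_1, a_2, …]` (for `n ≥ 1`):
`a_1 = ⌊1/α⌋`, `a_2 = ⌊1/fract(1/α)⌋`, … . -/
def cfCoeff (α : ℝ) (n : ℕ) : ℕ := ⌊(cfGauss α (n - 1))⁻¹⌋₊

/-- The standard words, with an index shift: `sWord a n` is `s_{n-1}`.  Thus
`sWord a 0 = s_{-1} = 1`, `sWord a 1 = s_0 = 0`, `sWord a 2 = s_1 = 0^{a_1 - 1} 1`, and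
`sWord a (n+1) = s_n = s_{n-1}^{a_n} s_{n-2}` for `n ≥ 2`. -/
def sWord (a : ℕ → ℕ) : ℕ → List ℝ
  | 0 => [1]
  | 1 => [0]
  | 2 => List.replicate (a 1 - 1) (0 : ℝ) ++ [1]
  | n + 3 => (List.replicate (a (n + 2)) (sWord a (n + 2))).flatten ++ sWord a (n + 1)

/-- The `n`-th letter (for `n ≥ 1`) of the one-sided infinite word `c_α = lim s_n`:
since `|s_n| ≥ n`, it is the `n`-th letter of `s_n`. -/
def cword (α : ℝ) (n : ℕ) : ℝ := (sWord (cfCoeff α) (n + 1)).getD (n - 1) 0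

/-- `w` is a (finite) prefix of the one-sided infinite word `c_α`. -/
def IsPrefC (α : ℝ) (w : List ℝ) : Prop :=
  w = (List.range w.length).map fun i => cword α (i + 1)

/-- The one-step transfer matrix `T(λ,E,a) = [[E - λa, -1], [1, 0]]`. -/
def transferT (lam : ℝ) (E : ℂ) (a : ℝ) : Matrix (Fin 2) (Fin 2) ℂ :=
  !![E - lam * a, -1; 1, 0]

/-- The transfer matrix over a word `w = w_1 … w_n`:
`M(λ,E,w) = T(λ,E,w_n) ⋯ T(λ,E,w_1)`. -/
def transferM (lam : ℝ) (E : ℂ) : List ℝ → Matrix (Fin 2) (Fin 2) ℂ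
  | [] => 1
  | a :: w => transferM lam E w * transferT lam E a

/-- The operator norm on `ℂ²` (with the euclidean norm) of a `2 × 2` complex matrix. -/
def opNorm (A : Matrix (Fin 2) (Fin 2) ℂ) : ℝ :=
  ‖Matrix.toEuclideanCLM (𝕜 := ℂ) A‖

/-- The word `v_{α,θ}^n = v_{α,θ}(1) … v_{α,θ}(n)`. -/
def sturmianWord (α θ : ℝ) (n : ℕ) : List ℝ :=
  (List.range n).map fun k => sturmian α θ (k + 1)

/-- The set of finite nonempty subwords of a two-sided sequence `v : ℤ → ℝ`. -/
def SubZ (v : ℤ → ℝ) : Set (List ℝ) :=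
  {w | w ≠ [] ∧ ∃ k : ℤ, w = (List.range w.length).map fun i => v (k + i)}

/-- The set of finite nonempty subwords of the one-sided word `c_α` (indexed from `1`). -/
def SubC (α : ℝ) : Set (List ℝ) :=
  {w | w ≠ [] ∧ ∃ k : ℕ, 1 ≤ k ∧ w = (List.range w.length).map fun i => cword α (k + i)}

/-- `W_α`, the set of all finite nonempty subwords of the sequences `v_{α,θ}`, `θ ∈ [0,1)`. -/
def Walpha (α : ℝ) : Set (List ℝ) :=
  {w | ∃ θ ∈ Set.Ico (0 : ℝ) 1, w ∈ SubZ (sturmian α θ)}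

/-- `α` is a bounded density number: `limsup_{n→∞} (1/n) ∑_{j=1}^n a_j < ∞` for the
continued fraction coefficients `a_j` of `α`. -/
def BoundedDensity (α : ℝ) : Prop :=
  Filter.IsBoundedUnder (· ≤ ·) Filter.atTop
    (fun n : ℕ => (1 / n : ℝ) * ∑ j ∈ Finset.Icc 1 n, (cfCoeff α j : ℝ))

end

section BestApproximation

lemma abs_sub_le_abs_sub_of_isUnit_det {R : Type*} [CommRing R] [LinearOrder R]
    [IsStrictOrderedRing R] {x : R} {q p q' p' k m : ℤ} (hdet : IsUnit (q' * p - q * p'))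
    (hsign : (q * x - p) * (q' * x - p') ≤ 0) (hq : 0 ≤ q) (hk : 0 < k) (hkq' : k < q') :
    |q * x - p| ≤ |k * x - m| := by
  -- Expand `(k, m)` in the basis `(q, p)`, `(q', p')` of `ℤ²`. As `0 < k < q'`, the coefficients
  -- have opposite signs, so the two contributions to `k * x - m` cannot cancel.
  obtain ⟨u, v, hku, hmu⟩ : ∃ u v : ℤ, k = u * q + v * q' ∧ m = u * p + v * p' := by
    have hdet_sq := Int.isUnit_mul_self hdet
    refine ⟨(q' * p - q * p') * (m * q' - k * p'), (q' * p - q * p') * (k * p - m * q), ?_, ?_⟩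
    · linear_combination -k * hdet_sq
    · linear_combination -m * hdet_sq
  have hu : u ≠ 0 := by
    rintro rfl
    rcases le_or_gt v 0 with hv | hv <;> nlinarith
  have huv : u * v ≤ 0 := by
    rcases hu.lt_or_gt with hu | hu
    · have hv : 0 ≤ v := by by_contra! hv; nlinarith
      exact mul_nonpos_of_nonpos_of_nonneg hu.le hv
    · have hv : v ≤ 0 := by by_contra! hv; nlinarith
      exact mul_nonpos_of_nonneg_of_nonpos hu.le hv
  have hsame_sign : 0 ≤ (u * (q * x - p)) * (v * (q' * x - p')) := by
    have huv' : (u * v : R) ≤ 0 := by exact_mod_cast huv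
    calc (0 : R) ≤ (u * v) * ((q * x - p) * (q' * x - p')) :=
          mul_nonneg_of_nonpos_of_nonpos huv' hsign
      _ = _ := by ring
  have hu_abs : (1 : R) ≤ |(u : R)| := by exact_mod_cast Int.one_le_abs hu
  calc |q * x - p| ≤ |(u : R)| * |q * x - p| := le_mul_of_one_le_left (abs_nonneg _) hu_abs
    _ ≤ |u * (q * x - p)| + |v * (q' * x - p')| := by
        rw [← abs_mul]
        exact le_add_of_nonneg_right (abs_nonneg _)
    _ = |u * (q * x - p) + v * (q' * x - p')| :=
        ((abs_add_eq_add_abs_iff _ _).2 (mul_nonneg_iff.1 hsame_sign)).symm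
    _ = |k * x - m| := by
        rw [hku, hmu]
        push_cast
        ring_nf

lemma floor_add_eq_floor_of_abs_le {R : Type*} [CommRing R] [LinearOrder R] [IsStrictOrderedRing R]
    [FloorRing R] {x δ : R} (hdist : ∀ m : ℤ, |δ| ≤ |x - m|) (hne : ∀ m : ℤ, x + δ ≠ m) :
    ⌊x + δ⌋ = ⌊x⌋ := by
  have hfloor := hdist ⌊x⌋
  have hceil := hdist (⌊x⌋ + 1)
  have hx : x < (⌊x⌋ + 1 : ℤ) := by exact_mod_cast Int.lt_floor_add_one x
  rw [abs_of_nonneg (sub_nonneg.2 (Int.floor_le x))] at hfloor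
  rw [abs_of_neg (sub_neg.2 hx)] at hceil
  refine Int.floor_eq_iff.2 ⟨?_, ?_⟩
  · linarith [neg_abs_le δ]
  · refine lt_of_le_of_ne ?_ (by exact_mod_cast hne (⌊x⌋ + 1))
    push_cast at hceil
    linarith [le_abs_self δ]

end BestApproximation

section Convergents

/-- The denominators `q_n` of the convergents of `[a_1, a_2, …]`, with an index shift:
`convergentDen a n` is `q_{n-1}`, starting from `q_{-1} = 0` and `q_0 = 1`. They are natural numbers
(unlike `GenContFract.dens`) because they serve as lengths of words. -/
def convergentDen (a : ℕ → ℕ) : ℕ → ℕ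
  | 0 => 0
  | 1 => 1
  | n + 2 => a (n + 1) * convergentDen a (n + 1) + convergentDen a n

/-- The numerators `p_n` of the convergents of `[a_1, a_2, …]`, with the index shift of
`convergentDen`: `convergentNum a n` is `p_{n-1}`, starting from `p_{-1} = 1` and `p_0 = 0`. -/
def convergentNum (a : ℕ → ℕ) : ℕ → ℕ
  | 0 => 1
  | 1 => 0
  | n + 2 => a (n + 1) * convergentNum a (n + 1) + convergentNum a n

lemma convergentDen_mul_convergentNum_sub (a : ℕ → ℕ) (n : ℕ) :
    (convergentDen a (n + 1) * convergentNum a n - convergentDen a n * convergentNum a (n + 1) : ℤ)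
      = (-1) ^ n := by
  induction n with
  | zero => simp [convergentDen, convergentNum]
  | succ n ih =>
    simp only [convergentDen, convergentNum, pow_succ]
    push_cast
    linear_combination -ih

lemma le_convergentDen_succ {a : ℕ → ℕ} (ha : ∀ n, 0 < a (n + 1)) (n : ℕ) :
    n ≤ convergentDen a (n + 1) := by
  induction n using Nat.twoStepInduction with
  | zero => exact Nat.zero_le _
  | one => simpa [convergentDen] using Nat.succ_le_of_lt (ha 0)
  | more n ih ih' =>
    have hprev : 0 < convergentDen a (n + 1) := by
      cases n with
      | zero => exact Nat.one_pos
      | succ n => exact n.succ_pos.trans_le ih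
    calc n + 1 + 1 ≤ convergentDen a (n + 2) + convergentDen a (n + 1) := Nat.add_le_add ih' hprev
      _ ≤ convergentDen a (n + 3) :=
        Nat.add_le_add_right (Nat.le_mul_of_pos_left _ (ha (n + 1))) _

variable {α : ℝ}

lemma irrational_cfGauss (hirr : Irrational α) (n : ℕ) : Irrational (cfGauss α n) := by
  induction n with
  | zero => exact hirr
  | succ n ih => exact (irrational_inv_iff.2 ih).sub_intCast _

lemma cfGauss_pos (hirr : Irrational α) (hα : 0 < α) : ∀ n, 0 < cfGauss α n
  | 0 => hα
  | n + 1 => (Int.fract_nonneg _).lt_of_ne' (irrational_cfGauss hirr (n + 1)).ne_zero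

lemma cfGauss_lt_one (hα : α < 1) : ∀ n, cfGauss α n < 1
  | 0 => hα
  | _ + 1 => Int.fract_lt_one _

lemma cfCoeff_pos (hirr : Irrational α) (hα : α ∈ Set.Ioo (0 : ℝ) 1) (n : ℕ) :
    0 < cfCoeff α (n + 1) :=
  Nat.floor_pos.2 ((one_le_inv₀ (cfGauss_pos hirr hα.1 n)).2 (cfGauss_lt_one hα.2 n).le)

lemma cfCoeff_add_cfGauss (hirr : Irrational α) (hα : 0 < α) (n : ℕ) :
    cfCoeff α (n + 1) + cfGauss α (n + 1) = (cfGauss α n)⁻¹ := by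
  have hfloor : (cfCoeff α (n + 1) : ℝ) = ⌊(cfGauss α n)⁻¹⌋ :=
    natCast_floor_eq_intCast_floor (inv_nonneg.2 (cfGauss_pos hirr hα n).le)
  rw [hfloor]
  exact Int.floor_add_fract _

/-- The approximation error `q_n α - p_n` of the convergents of `α`, with the index shift of
`convergentDen`. -/
noncomputable def convergentError (α : ℝ) (n : ℕ) : ℝ :=
  convergentDen (cfCoeff α) n * α - convergentNum (cfCoeff α) n

lemma convergentError_one (α : ℝ) : convergentError α 1 = α := by
  simp [convergentError, convergentDen, convergentNum]

lemma convergentError_two (α : ℝ) : convergentError α 2 = cfCoeff α 1 * α - 1 := by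
  simp [convergentError, convergentDen, convergentNum]

lemma convergentError_succ (hirr : Irrational α) (hα : 0 < α) (n : ℕ) :
    convergentError α (n + 1) = -cfGauss α n * convergentError α n := by
  induction n with
  | zero => simp [convergentError, convergentDen, convergentNum, cfGauss]
  | succ n ih =>
    have hrec : convergentError α (n + 2)
        = cfCoeff α (n + 1) * convergentError α (n + 1) + convergentError α n := by
      simp only [convergentError, convergentDen, convergentNum]
      push_cast
      ring
    have hinv : (cfGauss α n)⁻¹ * cfGauss α n = 1 :=
      inv_mul_cancel₀ (cfGauss_pos hirr hα n).ne'
    rw [hrec, eq_sub_of_add_eq (cfCoeff_add_cfGauss hirr hα n), ih]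
    linear_combination -convergentError α n * hinv

lemma convergentError_mul_convergentError_succ_nonpos (hirr : Irrational α) (hα : 0 < α) (n : ℕ) :
    convergentError α n * convergentError α (n + 1) ≤ 0 := by
  rw [convergentError_succ hirr hα]
  nlinarith [mul_nonneg (cfGauss_pos hirr hα n).le (mul_self_nonneg (convergentError α n))]

lemma abs_convergentError_le (hirr : Irrational α) (hα : 0 < α) {n : ℕ} {k : ℤ} (hk : 0 < k)
    (hkq : k < convergentDen (cfCoeff α) (n + 1)) (m : ℤ) :
    |convergentError α n| ≤ |k * α - m| := by
  have hdet := convergentDen_mul_convergentNum_sub (cfCoeff α) n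
  have hsign := convergentError_mul_convergentError_succ_nonpos hirr hα n
  exact_mod_cast abs_sub_le_abs_sub_of_isUnit_det (x := α) (m := m)
    (hdet ▸ isUnit_one.neg.pow n) (by exact_mod_cast hsign) (Int.natCast_nonneg _) hk hkq

lemma floor_add_convergentDen_mul (hirr : Irrational α) (hα : 0 < α) {n : ℕ} {k : ℤ} (hk : 0 < k)
    (hkq : k < convergentDen (cfCoeff α) (n + 1)) :
    ⌊(k + convergentDen (cfCoeff α) n) * α⌋ = ⌊k * α⌋ + convergentNum (cfCoeff α) n := by
  have hsplit : (k + convergentDen (cfCoeff α) n) * α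
      = k * α + convergentError α n + convergentNum (cfCoeff α) n := by
    rw [convergentError]
    ring
  have hirr_sum : Irrational ((k + convergentDen (cfCoeff α) n) * α) := by
    have hne : k + convergentDen (cfCoeff α) n ≠ 0 := by positivity
    exact_mod_cast hirr.intCast_mul hne
  rw [hsplit] at hirr_sum ⊢
  rw [Int.floor_add_natCast, floor_add_eq_floor_of_abs_le (abs_convergentError_le hirr hα hk hkq)]
  exact (hirr_sum.of_add_natCast _).ne_int

end Convergents

section Words

lemma map_range_mul_add_of_periodic {β : Type*} (f : ℕ → β) {L r a : ℕ}
    (hf : ∀ i, L + i < a * L + r → f (L + i) = f i) :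
    (List.range (a * L + r)).map f
      = (List.replicate a ((List.range L).map f)).flatten ++ (List.range r).map f := by
  induction a with
  | zero => simp
  | succ a ih =>
    have hlen : (a + 1) * L + r = L + (a * L + r) := by ring
    rw [hlen] at hf ⊢
    have hshift : (List.range (a * L + r)).map (f ∘ (L + ·)) = (List.range (a * L + r)).map f :=
      List.map_congr_left fun i hi => hf i (Nat.add_lt_add_left (List.mem_range.1 hi) L)
    rw [List.range_add, List.map_append, List.map_map, hshift, ih fun i hi => hf i (by omega),
      List.replicate_succ, List.flatten_cons, List.append_assoc]

lemma sturmian_eq_floor_sub_floor {α : ℝ} (hα : α ∈ Set.Icc (0 : ℝ) 1) (θ : ℝ) (n : ℤ) :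
    sturmian α θ n = ⌊(n + 1) * α + θ⌋ - ⌊n * α + θ⌋ := by
  have hstep : (n + 1) * α + θ = (n * α + θ) + α := by ring
  rw [sturmian, hstep]
  generalize n * α + θ = x
  have hx := Int.floor_add_fract x
  split_ifs with hmem
  · have hfloor : ⌊x + α⌋ = ⌊x⌋ + 1 := by
      rw [Int.floor_eq_iff]
      push_cast
      constructor <;> linarith [hmem.1, hmem.2, hα.2]
    simp [hfloor]
  · have hlt : Int.fract x < 1 - α := by
      by_contra! hge
      exact hmem ⟨hge, Int.fract_lt_one x⟩
    have hfloor : ⌊x + α⌋ = ⌊x⌋ := by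
      rw [Int.floor_eq_iff]
      constructor <;> linarith [Int.fract_nonneg x, hα.1]
    simp [hfloor]

-- The definition of `sturmianWord` first coerces `List.range n` to a list of integers.
lemma sturmianWord_eq_map_range (α θ : ℝ) (n : ℕ) :
    sturmianWord α θ n = (List.range n).map fun i : ℕ => sturmian α θ (i + 1) := by
  simp [sturmianWord, List.map_eq_flatMap, List.flatMap_assoc]

lemma sturmianWord_succ (α θ : ℝ) (n : ℕ) :
    sturmianWord α θ (n + 1) = sturmianWord α θ n ++ [sturmian α θ (n + 1)] := by
  simp [sturmianWord_eq_map_range, List.range_succ]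

variable {α : ℝ}

lemma sturmian_zero_add_convergentDen (hirr : Irrational α) (hα : α ∈ Set.Ioo (0 : ℝ) 1) {n : ℕ}
    {k : ℤ} (hk : 0 < k) (hkq : k + 1 < convergentDen (cfCoeff α) (n + 1)) :
    sturmian α 0 (k + convergentDen (cfCoeff α) n) = sturmian α 0 k := by
  have hfloor := floor_add_convergentDen_mul hirr hα.1 hk
    (lt_of_add_lt_of_nonneg_left hkq zero_le_one)
  have hfloor' := floor_add_convergentDen_mul hirr hα.1 (by omega : 0 < k + 1) hkq
  push_cast at hfloor'
  rw [add_right_comm] at hfloor'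
  simp only [sturmian_eq_floor_sub_floor (Set.Ioo_subset_Icc_self hα), add_zero]
  push_cast
  rw [hfloor, hfloor']
  push_cast
  ring

lemma sturmianWord_mul_convergentDen_add (hirr : Irrational α) (hα : α ∈ Set.Ioo (0 : ℝ) 1)
    {n a r : ℕ} (hlen : a * convergentDen (cfCoeff α) n + r + 2
      ≤ convergentDen (cfCoeff α) (n + 1) + convergentDen (cfCoeff α) n) :
    sturmianWord α 0 (a * convergentDen (cfCoeff α) n + r)
      = (List.replicate a (sturmianWord α 0 (convergentDen (cfCoeff α) n))).flatten
        ++ sturmianWord α 0 r := by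
  simp only [sturmianWord_eq_map_range]
  refine map_range_mul_add_of_periodic _ fun i hi => ?_
  rw [← sturmian_zero_add_convergentDen hirr hα (n := n) (k := i + 1) (by omega) (by omega)]
  push_cast
  ring_nf

lemma sturmian_zero_eq_zero_of_fract_lt {n : ℤ} (h : Int.fract (n * α) < 1 - α) :
    sturmian α 0 n = 0 := by
  refine if_neg fun hmem => h.not_ge ?_
  simpa only [add_zero] using hmem.1

lemma sturmianWord_zero_succ_eq_replicate {b : ℕ} (hlt : (b + 1) * α < 1)
    (hle : 1 ≤ (b + 2) * α) :
    sturmianWord α 0 (b + 1) = List.replicate b 0 ++ [1] := by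
  have hα : 0 < α := by linarith
  have hzeros : sturmianWord α 0 b = List.replicate b 0 := by
    rw [sturmianWord_eq_map_range]
    refine List.eq_replicate_iff.2 ⟨by simp, fun x hx => ?_⟩
    obtain ⟨j, hj, rfl⟩ := List.mem_map.1 hx
    have hjb : (j + 1 : ℝ) ≤ b := by exact_mod_cast List.mem_range.1 hj
    have hfract : Int.fract ((j + 1) * α) = (j + 1) * α :=
      Int.fract_eq_self.2 ⟨by positivity, by nlinarith⟩
    apply sturmian_zero_eq_zero_of_fract_lt
    push_cast
    rw [hfract]
    nlinarith
  have hone : sturmian α 0 (b + 1) = 1 := by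
    have hfract : Int.fract ((b + 1) * α) = (b + 1) * α :=
      Int.fract_eq_self.2 ⟨by positivity, hlt⟩
    refine if_pos ?_
    push_cast
    rw [add_zero, hfract]
    exact ⟨by linarith, hlt⟩
  rw [sturmianWord_succ, hzeros, hone]

lemma sturmian_zero_convergentDen_three (hirr : Irrational α) (hα : α ∈ Set.Ioo (0 : ℝ) 1) :
    sturmian α 0 (convergentDen (cfCoeff α) 3) = 0 := by
  have hg := cfGauss_pos hirr hα.1
  have herr_two : convergentError α 2 = -cfGauss α 1 * α := by
    rw [convergentError_succ hirr hα.1, convergentError_one]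
  have herr_three : convergentError α 3 = cfGauss α 2 * (cfGauss α 1 * α) := by
    rw [convergentError_succ hirr hα.1, herr_two]
    ring
  have hpos : 0 < cfGauss α 1 * α := mul_pos (hg 1) hα.1
  have hnonneg : 0 ≤ convergentError α 3 := herr_three ▸ (mul_pos (hg 2) hpos).le
  have hlt : convergentError α 3 < 1 - α := by
    have hcoeff : (1 : ℝ) ≤ cfCoeff α 1 := by exact_mod_cast cfCoeff_pos hirr hα 0
    calc convergentError α 3 < cfGauss α 1 * α :=
          herr_three ▸ mul_lt_of_lt_one_left hpos (cfGauss_lt_one hα.2 2)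
      _ = 1 - cfCoeff α 1 * α := by linarith [convergentError_two α]
      _ ≤ 1 - α := by nlinarith [hα.1]
  have hfract : Int.fract (convergentDen (cfCoeff α) 3 * α) = convergentError α 3 :=
    Int.fract_eq_iff.2 ⟨hnonneg, by linarith [hα.1], convergentNum (cfCoeff α) 3, by
      simp [convergentError]⟩
  apply sturmian_zero_eq_zero_of_fract_lt
  rwa [Int.cast_natCast, hfract]

lemma sWord_cfCoeff_two (hirr : Irrational α) (hα : α ∈ Set.Ioo (0 : ℝ) 1) :
    sWord (cfCoeff α) 2 = sturmianWord α 0 (convergentDen (cfCoeff α) 2) := by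
  obtain ⟨b, hb⟩ := Nat.exists_eq_add_of_lt (cfCoeff_pos hirr hα 0)
  rw [zero_add, zero_add] at hb
  have hmul : (b + 1 + cfGauss α 1) * α = 1 := by
    have hcoeff := cfCoeff_add_cfGauss hirr hα.1 0
    rw [zero_add, hb] at hcoeff
    push_cast at hcoeff
    rw [hcoeff]
    exact inv_mul_cancel₀ hα.1.ne'
  have hlt : (b + 1) * α < 1 := by nlinarith [mul_pos (cfGauss_pos hirr hα.1 1) hα.1]
  have hle : 1 ≤ (b + 2) * α := by nlinarith [cfGauss_lt_one hα.2 1, hα.1]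
  simp [sWord, convergentDen, hb, sturmianWord_zero_succ_eq_replicate hlt hle]

lemma sWord_cfCoeff_three (hirr : Irrational α) (hα : α ∈ Set.Ioo (0 : ℝ) 1) :
    sWord (cfCoeff α) 3 = sturmianWord α 0 (convergentDen (cfCoeff α) 3) := by
  have hden : convergentDen (cfCoeff α) 3
      = cfCoeff α 2 * convergentDen (cfCoeff α) 2 + 1 := rfl
  have hden_two : 0 < convergentDen (cfCoeff α) 2 :=
    le_convergentDen_succ (cfCoeff_pos hirr hα) 1
  have hpow := sturmianWord_mul_convergentDen_add hirr hα (n := 2) (a := cfCoeff α 2) (r := 0)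
    (by rw [hden]; omega)
  have hlast := sturmian_zero_convergentDen_three hirr hα
  rw [hden] at hlast ⊢
  push_cast at hlast
  rw [add_zero] at hpow
  calc sWord (cfCoeff α) 3
      = (List.replicate (cfCoeff α 2) (sWord (cfCoeff α) 2)).flatten ++ [0] := rfl
    _ = sturmianWord α 0 (cfCoeff α 2 * convergentDen (cfCoeff α) 2 + 1) := by
      rw [sturmianWord_succ, hpow, sWord_cfCoeff_two hirr hα]
      simp [sturmianWord_eq_map_range, hlast]

theorem sWord_cfCoeff_eq_sturmianWord (hirr : Irrational α) (hα : α ∈ Set.Ioo (0 : ℝ) 1) (n : ℕ) :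
    sWord (cfCoeff α) (n + 2) = sturmianWord α 0 (convergentDen (cfCoeff α) (n + 2)) := by
  induction n using Nat.twoStepInduction with
  | zero => exact sWord_cfCoeff_two hirr hα
  | one => exact sWord_cfCoeff_three hirr hα
  | more n ih ih' =>
    have hden : convergentDen (cfCoeff α) (n + 4) = cfCoeff α (n + 3)
        * convergentDen (cfCoeff α) (n + 3) + convergentDen (cfCoeff α) (n + 2) := rfl
    have htwo_le : n + 2 ≤ convergentDen (cfCoeff α) (n + 3) :=
      le_convergentDen_succ (cfCoeff_pos hirr hα) (n + 2)
    calc sWord (cfCoeff α) (n + 4)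
        = (List.replicate (cfCoeff α (n + 3)) (sWord (cfCoeff α) (n + 3))).flatten
          ++ sWord (cfCoeff α) (n + 2) := rfl
      _ = sturmianWord α 0 (convergentDen (cfCoeff α) (n + 4)) := by
        rw [ih, ih', hden, sturmianWord_mul_convergentDen_add hirr hα (by rw [hden]; omega)]

end Words

theorem sturmian_zero_eq_cword
    (α : ℝ) (hirr : Irrational α) (hα : α ∈ Set.Ioo (0 : ℝ) 1)
    (n : ℕ) (hn : 1 ≤ n) :
    sturmian α 0 (n : ℤ) = cword α n := by
  obtain ⟨i, rfl⟩ := Nat.exists_eq_add_of_le' hn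
  have hi : i < convergentDen (cfCoeff α) (i + 2) :=
    le_convergentDen_succ (cfCoeff_pos hirr hα) (i + 1)
  rw [cword, Nat.add_sub_cancel, sWord_cfCoeff_eq_sturmianWord hirr hα i, sturmianWord_eq_map_range,
    List.getD_eq_getElem _ _ (by simpa using hi)]
  simp
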